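/- Let ε ∈ (0, 1/2) and define φ_n by φ̂_n(ξ) = e^{50iξ} χ_n(ξ) (1+ξ²)^{-1/4}(1+log(1+ξ²))^{-2}, where χ_n is an even C^∞ cutoff equal to 1 on [0,n] and vanishing outside [0, n+1] for ξ ≥ 0 (with uniformly bounded derivatives). Let p : ℝ → [0,1] be continuous with p = 1 on [-99,-5] and supp p ⊂ [-110,-1]. Then ∫_ℝ p(x) |(Λ^ε φ_n)(x)|² dx → ∞ as n → ∞. -/

import Mathlib

open MeasureTheory Real Filter

/-! After the phase `e^{50iξ}` is absorbed into a translation, `Λ^ε φ_n` is the inverse Fourier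
transform of `χ_n w` with the real weight `w = (1+ξ²)^{ε/2-1/4} (1+log(1+ξ²))^{-2}`.
Since `1 - (x+50)²/45² ≤ p x` for every `x`, Plancherel applied to `χ_n w` and to its derivative
bounds the localized integral from below by `(2π)⁻¹ (‖χ_n w‖² - 45⁻² ‖(χ_n w)'‖²)`, so no estimate
of the tails of `Λ^ε φ_n` is needed. The first norm diverges because `w²` decays more slowly than
`1/ξ`. The second stays bounded: `w'` is square integrable, and `χ_n' w` is uniformly bounded and
lives on two intervals of length one. -/

section AngularFourierInv

open scoped FourierTransform SchwartzMap

/-- The inverse Fourier transform in the angular frequency convention,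
`f ↦ (2π)⁻¹ ∫ e^{ixξ} f(ξ) dξ`; Mathlib's `𝓕⁻` has the phase `e^{2πixξ}` and no prefactor. -/
noncomputable def angularFourierInv (f : ℝ → ℂ) (x : ℝ) : ℂ :=
  (1 / (2 * π) : ℂ) * ∫ ξ : ℝ, Complex.exp (Complex.I * x * ξ) * f ξ

lemma angularFourierInv_eq_fourierInv (f : ℝ → ℂ) (x : ℝ) :
    angularFourierInv f x = (1 / (2 * π) : ℂ) * 𝓕⁻ f (x / (2 * π)) := by
  rw [angularFourierInv, Real.fourierInv_eq']
  congr 2 with ξ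
  have hπ : (π : ℂ) ≠ 0 := by exact_mod_cast Real.pi_ne_zero
  simp only [smul_eq_mul, RCLike.inner_apply, conj_trivial]
  congr 2
  push_cast
  field_simp

lemma angularFourierInv_exp_mul (h : ℝ) (f : ℝ → ℂ) (x : ℝ) :
    angularFourierInv (fun ξ ↦ Complex.exp (h * Complex.I * ξ) * f ξ) x =
      angularFourierInv f (x + h) := by
  simp only [angularFourierInv, ← mul_assoc, ← Complex.exp_add]
  congr! 5
  push_cast
  ring

lemma angularFourierInv_deriv {f : ℝ → ℂ} (hf : Integrable f) (hdiff : Differentiable ℝ f)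
    (hf' : Integrable (deriv f)) (x : ℝ) :
    angularFourierInv (deriv f) x = -Complex.I * x * angularFourierInv f x := by
  have hπ : (π : ℂ) ≠ 0 := by exact_mod_cast Real.pi_ne_zero
  simp only [angularFourierInv_eq_fourierInv, Real.fourierInv_eq_fourier_neg]
  simp only [Real.fourier_deriv hf hdiff hf', smul_eq_mul]
  push_cast
  field_simp

lemma norm_sq_angularFourierInv (f : ℝ → ℂ) (x : ℝ) :
    ‖angularFourierInv f x‖ ^ 2 = (1 / (2 * π)) ^ 2 * ‖𝓕⁻ f (x / (2 * π))‖ ^ 2 := by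
  rw [angularFourierInv_eq_fourierInv, norm_mul, mul_pow]
  simp [abs_of_pos Real.pi_pos]

lemma integrable_norm_sq_angularFourierInv (f : 𝓢(ℝ, ℂ)) :
    Integrable fun x ↦ ‖angularFourierInv f x‖ ^ 2 := by
  have h : Integrable fun y ↦ ‖𝓕⁻ (f : ℝ → ℂ) y‖ ^ 2 := by
    rw [← SchwartzMap.fourierInv_coe]
    exact ((𝓕⁻ f).memLp 2 volume).integrable_norm_pow two_ne_zero
  simpa only [norm_sq_angularFourierInv] using (h.comp_div two_pi_pos.ne').const_mul _

lemma integral_norm_sq_angularFourierInv (f : 𝓢(ℝ, ℂ)) :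
    ∫ x, ‖angularFourierInv f x‖ ^ 2 = (2 * π)⁻¹ * ∫ ξ, ‖f ξ‖ ^ 2 := by
  have plancherel : ∫ y, ‖𝓕⁻ (f : ℝ → ℂ) y‖ ^ 2 = ∫ ξ, ‖f ξ‖ ^ 2 := by
    rw [← SchwartzMap.fourierInv_coe, ← SchwartzMap.integral_norm_sq_fourier,
      FourierTransform.fourier_fourierInv_eq]
  simp only [norm_sq_angularFourierInv]
  rw [integral_const_mul, Measure.integral_comp_div (fun y ↦ ‖𝓕⁻ (f : ℝ → ℂ) y‖ ^ 2), plancherel,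
    smul_eq_mul, abs_of_pos two_pi_pos]
  field_simp

lemma norm_sq_angularFourierInv_derivCLM (f : 𝓢(ℝ, ℂ)) (x : ℝ) :
    ‖angularFourierInv (SchwartzMap.derivCLM ℂ ℂ f) x‖ ^ 2 =
      x ^ 2 * ‖angularFourierInv f x‖ ^ 2 := by
  have hderiv : ⇑(SchwartzMap.derivCLM ℂ ℂ f) = deriv f :=
    funext (SchwartzMap.derivCLM_apply ℂ f)
  rw [hderiv, angularFourierInv_deriv f.integrable f.differentiable
    (hderiv ▸ (SchwartzMap.derivCLM ℂ ℂ f).integrable)]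
  simp [mul_pow]

end AngularFourierInv

section Localization

open scoped SchwartzMap

lemma integral_sub_inv_sq_mul_integral_le {α : Type*} [MeasurableSpace α] {μ : Measure α}
    {F g p : α → ℝ} {r : ℝ} (hr : 0 < r) (hF0 : ∀ x, 0 ≤ F x) (hF : Integrable F μ)
    (hgF : Integrable (fun x ↦ g x ^ 2 * F x) μ) (hpF : Integrable (fun x ↦ p x * F x) μ)
    (hp0 : ∀ x, 0 ≤ p x) (hp1 : ∀ x, |g x| ≤ r → 1 ≤ p x) :
    (∫ x, F x ∂μ) - (r ^ 2)⁻¹ * ∫ x, g x ^ 2 * F x ∂μ ≤ ∫ x, p x * F x ∂μ := by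
  rw [← integral_const_mul, ← integral_sub hF (hgF.const_mul _)]
  refine integral_mono (hF.sub (hgF.const_mul _)) hpF fun x ↦ ?_
  have parabola_le : 1 - (r ^ 2)⁻¹ * g x ^ 2 ≤ p x := by
    rcases le_or_gt |g x| r with hx | hx
    · have : 0 ≤ (r ^ 2)⁻¹ * g x ^ 2 := by positivity
      linarith [hp1 x hx]
    · have : 1 ≤ (r ^ 2)⁻¹ * g x ^ 2 := by
        rw [inv_mul_eq_div, one_le_div (by positivity), ← sq_abs (g x)]
        gcongr
      linarith [hp0 x]
  linear_combination mul_le_mul_of_nonneg_right parabola_le (hF0 x)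

lemma le_integral_mul_norm_sq_angularFourierInv (f : 𝓢(ℝ, ℂ)) {h r : ℝ} (hr : 0 < r) {p : ℝ → ℝ}
    (hp : AEStronglyMeasurable p) (hp01 : ∀ x, p x ∈ Set.Icc 0 1)
    (hp1 : ∀ x, |x + h| ≤ r → p x = 1) :
    (2 * π)⁻¹ * ((∫ ξ, ‖f ξ‖ ^ 2) - (r ^ 2)⁻¹ * ∫ ξ, ‖deriv f ξ‖ ^ 2) ≤
      ∫ x, p x * ‖angularFourierInv f (x + h)‖ ^ 2 := by
  have hF := (integrable_norm_sq_angularFourierInv f).comp_add_right h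
  have hgF := (integrable_norm_sq_angularFourierInv (SchwartzMap.derivCLM ℂ ℂ f)).comp_add_right h
  have moment := integral_norm_sq_angularFourierInv (SchwartzMap.derivCLM ℂ ℂ f)
  simp only [norm_sq_angularFourierInv_derivCLM, SchwartzMap.derivCLM_apply] at hgF moment
  have hpF : Integrable fun x ↦ p x * ‖angularFourierInv f (x + h)‖ ^ 2 :=
    hF.bdd_mul (c := 1) hp <| Eventually.of_forall fun x ↦ by
      rw [Real.norm_of_nonneg (hp01 x).1]
      exact (hp01 x).2
  calc (2 * π)⁻¹ * ((∫ ξ, ‖f ξ‖ ^ 2) - (r ^ 2)⁻¹ * ∫ ξ, ‖deriv f ξ‖ ^ 2)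
      = (∫ x, ‖angularFourierInv f (x + h)‖ ^ 2) -
          (r ^ 2)⁻¹ * ∫ x, (x + h) ^ 2 * ‖angularFourierInv f (x + h)‖ ^ 2 := by
        rw [integral_add_right_eq_self (fun x ↦ ‖angularFourierInv f x‖ ^ 2),
          integral_add_right_eq_self (fun x ↦ x ^ 2 * ‖angularFourierInv f x‖ ^ 2), moment,
          integral_norm_sq_angularFourierInv]
        ring
    _ ≤ ∫ x, p x * ‖angularFourierInv f (x + h)‖ ^ 2 :=
        integral_sub_inv_sq_mul_integral_le hr (fun x ↦ sq_nonneg _) hF hgF hpF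
          (fun x ↦ (hp01 x).1) fun x hx ↦ (hp1 x hx).ge

end Localization

section Cutoff

lemma tendsto_intervalIntegral_atTop_of_not_integrableOn_Ioi {g : ℝ → ℝ} {a : ℝ}
    (hg0 : ∀ x, 0 ≤ g x) (hg : LocallyIntegrable g) (hng : ¬ IntegrableOn g (Set.Ioi a)) :
    Tendsto (fun b ↦ ∫ x in a..b, g x) atTop atTop := by
  have hint : ∀ b c, IntervalIntegrable g volume b c := fun b c ↦
    (hg.integrableOn_isCompact isCompact_uIcc).intervalIntegrable
  have hmono : Monotone fun b ↦ ∫ x in a..b, g x := fun b c hbc ↦ by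
    rw [← sub_nonneg, intervalIntegral.integral_interval_sub_left (hint a c) (hint a b)]
    exact intervalIntegral.integral_nonneg hbc fun x _ ↦ hg0 x
  refine (tendsto_atTop_of_monotone hmono).resolve_right fun ⟨l, hl⟩ ↦ hng ?_
  refine integrableOn_Ioi_of_intervalIntegral_norm_tendsto l a (fun b ↦ (hint a b).1) tendsto_id ?_
  simpa only [Real.norm_of_nonneg (hg0 _)] using hl

lemma volume_abs_preimage_Icc_le (a b : ℝ) :
    volume (abs ⁻¹' Set.Icc a b) ≤ 2 * ENNReal.ofReal (b - a) := by
  have hsub : abs ⁻¹' Set.Icc a b ⊆ Set.Icc a b ∪ Set.Icc (-b) (-a) := by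
    rintro x ⟨hax, hxb⟩
    rcases abs_cases x with ⟨hx, _⟩ | ⟨hx, _⟩ <;> rw [hx] at hax hxb
    · exact Or.inl ⟨hax, hxb⟩
    · exact Or.inr ⟨by linarith, by linarith⟩
  calc volume (abs ⁻¹' Set.Icc a b) ≤ volume (Set.Icc a b) + volume (Set.Icc (-b) (-a)) :=
        (measure_mono hsub).trans (measure_union_le _ _)
    _ = 2 * ENNReal.ofReal (b - a) := by
        rw [Real.volume_Icc, Real.volume_Icc, neg_sub_neg, two_mul]

/-- Smooth cutoffs `χ n` to `[-n, n]` whose transition to zero takes place in `n ≤ |ξ| ≤ n + 1`,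
at a speed bounded uniformly in `n`. -/
structure IsUniformCutoff (χ : ℕ → ℝ → ℝ) : Prop where
  contDiff : ∀ n, ContDiff ℝ (⊤ : ℕ∞) (χ n)
  abs_le_one : ∀ n ξ, |χ n ξ| ≤ 1
  eq_one : ∀ (n : ℕ) (ξ : ℝ), |ξ| ≤ n → χ n ξ = 1
  eq_zero : ∀ (n : ℕ) (ξ : ℝ), (n : ℝ) + 1 ≤ |ξ| → χ n ξ = 0
  exists_abs_deriv_le : ∃ K, ∀ n ξ, |deriv (χ n) ξ| ≤ K

lemma isUniformCutoff_of_even {χ : ℕ → ℝ → ℝ} (hsmooth : ∀ n, ContDiff ℝ (⊤ : ℕ∞) (χ n))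
    (heven : ∀ n ξ, χ n (-ξ) = χ n ξ) (hle : ∀ n ξ, |χ n ξ| ≤ 1)
    (hone : ∀ (n : ℕ) (ξ : ℝ), 0 ≤ ξ → ξ ≤ n → χ n ξ = 1)
    (hzero : ∀ (n : ℕ) (ξ : ℝ), (n : ℝ) + 1 ≤ ξ → χ n ξ = 0)
    (hderiv : ∃ K, ∀ n ξ, |deriv (χ n) ξ| ≤ K) : IsUniformCutoff χ := by
  have habs : ∀ n ξ, χ n |ξ| = χ n ξ := fun n ξ ↦ by
    rcases abs_choice ξ with h | h <;> simp [h, heven]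
  exact ⟨hsmooth, hle, fun n ξ h ↦ habs n ξ ▸ hone n |ξ| (abs_nonneg ξ) h,
    fun n ξ h ↦ habs n ξ ▸ hzero n |ξ| h, hderiv⟩

namespace IsUniformCutoff

variable {χ : ℕ → ℝ → ℝ} {w : ℝ → ℝ}

lemma hasCompactSupport (hχ : IsUniformCutoff χ) (n : ℕ) : HasCompactSupport (χ n) := by
  refine HasCompactSupport.intro (isCompact_closedBall (0 : ℝ) (n + 1)) fun ξ hξ ↦ ?_
  rw [mem_closedBall_zero_iff, Real.norm_eq_abs, not_le] at hξ
  exact hχ.eq_zero n ξ hξ.le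

lemma deriv_eq_zero (hχ : IsUniformCutoff χ) {n : ℕ} {ξ : ℝ}
    (hξ : ξ ∉ abs ⁻¹' Set.Icc (n : ℝ) (n + 1)) : deriv (χ n) ξ = 0 := by
  have hcases : |ξ| < n ∨ (n : ℝ) + 1 < |ξ| := by
    simpa only [Set.mem_preimage, Set.mem_Icc, not_and_or, not_le] using hξ
  rcases hcases with inner | outer
  · have : χ n =ᶠ[nhds ξ] fun _ ↦ 1 := by
      filter_upwards [continuous_abs.continuousAt.eventually_lt_const inner] with y hy
      exact hχ.eq_one n y hy.le
    rw [this.deriv_eq, deriv_const]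
  · have : χ n =ᶠ[nhds ξ] fun _ ↦ 0 := by
      filter_upwards [continuous_abs.continuousAt.eventually_const_lt outer] with y hy
      exact hχ.eq_zero n y hy.le
    rw [this.deriv_eq, deriv_const]

lemma deriv_mul_sq_le (hχ : IsUniformCutoff χ) (hw : Differentiable ℝ w) {K M : ℝ}
    (hK : ∀ n ξ, |deriv (χ n) ξ| ≤ K) (hM : ∀ ξ, |w ξ| ≤ M) (n : ℕ) (ξ : ℝ) :
    deriv (fun ξ ↦ χ n ξ * w ξ) ξ ^ 2 ≤
      2 * (deriv w ξ) ^ 2 +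
        (abs ⁻¹' Set.Icc (n : ℝ) (n + 1)).indicator (fun _ ↦ 2 * (K * M) ^ 2) ξ := by
  have bulk : (χ n ξ * deriv w ξ) ^ 2 ≤ (deriv w ξ) ^ 2 := by
    rw [mul_pow]
    exact mul_le_of_le_one_left (sq_nonneg _) ((sq_le_one_iff_abs_le_one _).2 (hχ.abs_le_one n ξ))
  have transition : 2 * (deriv (χ n) ξ * w ξ) ^ 2 ≤
      (abs ⁻¹' Set.Icc (n : ℝ) (n + 1)).indicator (fun _ ↦ 2 * (K * M) ^ 2) ξ := by
    by_cases hξ : ξ ∈ abs ⁻¹' Set.Icc (n : ℝ) (n + 1)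
    · rw [Set.indicator_of_mem hξ, ← sq_abs, abs_mul]
      gcongr
      · exact (abs_nonneg _).trans (hK n ξ)
      · exact hK n ξ
      · exact hM ξ
    · simp [Set.indicator_of_notMem hξ, hχ.deriv_eq_zero hξ]
  rw [deriv_fun_mul ((hχ.contDiff n).differentiable (by simp) ξ) (hw ξ)]
  linarith [add_sq_le (a := deriv (χ n) ξ * w ξ) (b := χ n ξ * deriv w ξ)]

lemma exists_integral_deriv_mul_sq_le (hχ : IsUniformCutoff χ) (hw : Differentiable ℝ w)
    (hbdd : ∃ M, ∀ ξ, |w ξ| ≤ M) (hw' : Integrable fun ξ ↦ deriv w ξ ^ 2) :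
    ∃ C, ∀ n, ∫ ξ, deriv (fun ξ ↦ χ n ξ * w ξ) ξ ^ 2 ≤ C := by
  obtain ⟨K, hK⟩ := hχ.exists_abs_deriv_le
  obtain ⟨M, hM⟩ := hbdd
  refine ⟨2 * (∫ ξ, deriv w ξ ^ 2) + 2 * (2 * (K * M) ^ 2), fun n ↦ ?_⟩
  set shell : Set ℝ := abs ⁻¹' Set.Icc (n : ℝ) (n + 1)
  have hmeas : MeasurableSet shell := measurableSet_Icc.preimage measurable_norm
  have hvol : volume shell ≤ 2 := by simpa using volume_abs_preimage_Icc_le (n : ℝ) (n + 1)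
  have hind : Integrable (shell.indicator fun _ ↦ 2 * (K * M) ^ 2) :=
    (integrable_indicator_iff hmeas).2
      (integrableOn_const (hvol.trans_lt ENNReal.ofNat_lt_top).ne)
  calc ∫ ξ, deriv (fun ξ ↦ χ n ξ * w ξ) ξ ^ 2
      ≤ ∫ ξ, (2 * deriv w ξ ^ 2 + shell.indicator (fun _ ↦ 2 * (K * M) ^ 2) ξ) :=
        integral_mono_of_nonneg (Eventually.of_forall fun ξ ↦ sq_nonneg _)
          ((hw'.const_mul 2).add hind) (Eventually.of_forall (hχ.deriv_mul_sq_le hw hK hM n))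
    _ = 2 * (∫ ξ, deriv w ξ ^ 2) + volume.real shell * (2 * (K * M) ^ 2) := by
        rw [integral_add (hw'.const_mul 2) hind, integral_const_mul,
          integral_indicator_const _ hmeas, smul_eq_mul]
    _ ≤ 2 * (∫ ξ, deriv w ξ ^ 2) + 2 * (2 * (K * M) ^ 2) := by
        gcongr
        exact ENNReal.toReal_le_of_le_ofReal zero_le_two (by simpa using hvol)

lemma tendsto_integral_mul_sq (hχ : IsUniformCutoff χ) (hw : Continuous w)
    (hw2 : ¬ IntegrableOn (fun ξ ↦ w ξ ^ 2) (Set.Ioi 0)) :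
    Tendsto (fun n ↦ ∫ ξ, (χ n ξ * w ξ) ^ 2) atTop atTop := by
  have hdiv := tendsto_intervalIntegral_atTop_of_not_integrableOn_Ioi
    (fun ξ ↦ sq_nonneg (w ξ)) (hw.pow 2).locallyIntegrable hw2
  refine tendsto_atTop_mono (fun n ↦ ?_) (hdiv.comp tendsto_natCast_atTop_atTop)
  have hsupp : HasCompactSupport fun ξ ↦ χ n ξ * w ξ := (hχ.hasCompactSupport n).mul_right
  have hint : Integrable fun ξ ↦ (χ n ξ * w ξ) ^ 2 :=
    Continuous.integrable_of_hasCompactSupport (((hχ.contDiff n).continuous.mul hw).pow 2)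
      (hsupp.comp_left (g := fun t : ℝ ↦ t ^ 2) (zero_pow two_ne_zero))
  have hn : (0 : ℝ) ≤ n := n.cast_nonneg
  calc ∫ ξ in (0 : ℝ)..n, w ξ ^ 2 = ∫ ξ in (0 : ℝ)..n, (χ n ξ * w ξ) ^ 2 := by
        refine intervalIntegral.integral_congr fun ξ hξ ↦ ?_
        rw [Set.uIcc_of_le hn] at hξ
        simp only [hχ.eq_one n ξ ((abs_of_nonneg hξ.1).trans_le hξ.2), one_mul]
    _ = ∫ ξ in Set.Ioc (0 : ℝ) n, (χ n ξ * w ξ) ^ 2 := intervalIntegral.integral_of_le hn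
    _ ≤ ∫ ξ, (χ n ξ * w ξ) ^ 2 :=
        setIntegral_le_integral hint (Eventually.of_forall fun ξ ↦ sq_nonneg _)

theorem tendsto_integral_mul_norm_sq_angularFourierInv (hχ : IsUniformCutoff χ)
    (hw : ContDiff ℝ (⊤ : ℕ∞) w) (hbdd : ∃ M, ∀ ξ, |w ξ| ≤ M)
    (hw' : Integrable fun ξ ↦ deriv w ξ ^ 2)
    (hw2 : ¬ IntegrableOn (fun ξ ↦ w ξ ^ 2) (Set.Ioi 0))
    {h r : ℝ} (hr : 0 < r) {p : ℝ → ℝ} (hp : AEStronglyMeasurable p)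
    (hp01 : ∀ x, p x ∈ Set.Icc 0 1) (hp1 : ∀ x, |x + h| ≤ r → p x = 1) :
    Tendsto (fun n ↦ ∫ x, p x * ‖angularFourierInv (fun ξ ↦ ((χ n ξ * w ξ : ℝ) : ℂ)) (x + h)‖ ^ 2)
      atTop atTop := by
  have hdiff := hw.differentiable (by simp)
  obtain ⟨C, hC⟩ := hχ.exists_integral_deriv_mul_sq_le hdiff hbdd hw'
  refine tendsto_atTop_mono (fun n ↦ ?_) <| Tendsto.const_mul_atTop (inv_pos.2 two_pi_pos) <|
    tendsto_atTop_add_const_right atTop (-((r ^ 2)⁻¹ * C))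
      (hχ.tendsto_integral_mul_sq hw.continuous hw2)
  have hsmooth : ContDiff ℝ (⊤ : ℕ∞) fun ξ ↦ χ n ξ * w ξ := (hχ.contDiff n).mul hw
  have hsupp : HasCompactSupport fun ξ ↦ ((χ n ξ * w ξ : ℝ) : ℂ) :=
    (hχ.hasCompactSupport n).mul_right.comp_left Complex.ofReal_zero
  let f := hsupp.toSchwartzMap (Complex.ofRealCLM.contDiff.comp hsmooth)
  have hf : ⇑f = fun ξ ↦ ((χ n ξ * w ξ : ℝ) : ℂ) := rfl
  have hf' : deriv (fun ξ ↦ ((χ n ξ * w ξ : ℝ) : ℂ)) =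
      fun ξ ↦ ((deriv (fun ξ ↦ χ n ξ * w ξ) ξ : ℝ) : ℂ) := funext fun ξ ↦
    (hsmooth.differentiable (by simp) ξ).hasDerivAt.ofReal_comp.deriv
  have lower := le_integral_mul_norm_sq_angularFourierInv f hr hp hp01 hp1
  simp only [hf, hf', Complex.norm_real, Real.norm_eq_abs, sq_abs] at lower
  refine le_trans ?_ lower
  rw [← sub_eq_add_neg]
  gcongr
  exact hC n

end IsUniformCutoff

end Cutoff

section Weight

/-- The Fourier multiplier `(1+ξ²)^{s/2} (1+log(1+ξ²))^β`, of order `s` with a logarithmic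
correction; the symbol of `Λ^ε φ_n` is this weight with `s = ε - 1/2` and `β = -2`. -/
noncomputable def logSobolevWeight (s β ξ : ℝ) : ℝ :=
  (1 + ξ ^ 2) ^ (s / 2) * (1 + Real.log (1 + ξ ^ 2)) ^ β

lemma one_le_one_add_sq (ξ : ℝ) : 1 ≤ 1 + ξ ^ 2 :=
  le_add_of_nonneg_right (sq_nonneg ξ)

lemma one_le_one_add_log_one_add_sq (ξ : ℝ) : 1 ≤ 1 + Real.log (1 + ξ ^ 2) :=
  le_add_of_nonneg_right (Real.log_nonneg (one_le_one_add_sq ξ))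

lemma rpow_isLittleO_rpow_mul_one_add_log_rpow {a b : ℝ} (hab : a < b) (β : ℝ) :
    (fun u ↦ u ^ a) =o[atTop] fun u ↦ u ^ b * (1 + Real.log u) ^ β := by
  have hexp : Tendsto (fun u ↦ Real.exp 1 * u) atTop atTop :=
    tendsto_id.const_mul_atTop (Real.exp_pos 1)
  have hlog : (fun u ↦ (1 + Real.log u) ^ (-β)) =o[atTop] fun u ↦ u ^ (b - a) := by
    refine (((isLittleO_log_rpow_rpow_atTop (-β) (sub_pos.2 hab)).comp_tendsto hexp).congr' ?_
      ?_).trans_isBigO (Asymptotics.isBigO_const_mul_self (Real.exp 1 ^ (b - a)) _ _)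
    · filter_upwards [eventually_gt_atTop 0] with u hu
      simp [Real.log_mul (Real.exp_ne_zero 1) hu.ne']
    · filter_upwards [eventually_gt_atTop 0] with u hu
      exact Real.mul_rpow (Real.exp_pos 1).le hu.le
  refine ((Asymptotics.isBigO_refl (fun u ↦ u ^ a * (1 + Real.log u) ^ β) atTop).mul_isLittleO
    hlog).congr' ?_ ?_
  · filter_upwards [eventually_ge_atTop 1] with u hu
    have hL : 0 < 1 + Real.log u := by linarith [Real.log_nonneg hu]
    rw [mul_assoc, ← Real.rpow_add hL, add_neg_cancel, Real.rpow_zero, mul_one]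
  · filter_upwards [eventually_gt_atTop 0] with u hu
    rw [mul_right_comm, ← Real.rpow_add hu, add_sub_cancel]

lemma rpow_mul_rpow_mul_eq_logSobolevWeight (s a β ξ : ℝ) :
    (1 + ξ ^ 2) ^ (s / 2) * ((1 + ξ ^ 2) ^ a * (1 + Real.log (1 + ξ ^ 2)) ^ β) =
      logSobolevWeight (s + 2 * a) β ξ := by
  rw [logSobolevWeight, add_div, mul_div_cancel_left₀ a two_ne_zero,
    Real.rpow_add (by positivity), mul_assoc]

lemma logSobolevWeight_pos (s β ξ : ℝ) : 0 < logSobolevWeight s β ξ :=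
  mul_pos (Real.rpow_pos_of_pos (by positivity) _)
    (Real.rpow_pos_of_pos (by linarith [one_le_one_add_log_one_add_sq ξ]) _)

lemma abs_logSobolevWeight_le_one {s β : ℝ} (hs : s ≤ 0) (hβ : β ≤ 0) (ξ : ℝ) :
    |logSobolevWeight s β ξ| ≤ 1 := by
  rw [abs_of_pos (logSobolevWeight_pos s β ξ)]
  have hL := one_le_one_add_log_one_add_sq ξ
  exact mul_le_one₀
    (Real.rpow_le_one_of_one_le_of_nonpos (one_le_one_add_sq ξ) (by linarith))
    (Real.rpow_nonneg (by linarith) _) (Real.rpow_le_one_of_one_le_of_nonpos hL hβ)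

lemma contDiff_logSobolevWeight (s β : ℝ) : ContDiff ℝ (⊤ : ℕ∞) (logSobolevWeight s β) := by
  have hu : ∀ ξ : ℝ, 1 + ξ ^ 2 ≠ 0 := fun ξ ↦ by positivity
  have hL : ∀ ξ : ℝ, 1 + Real.log (1 + ξ ^ 2) ≠ 0 := fun ξ ↦ by
    linarith [one_le_one_add_log_one_add_sq ξ]
  have hsmooth : ContDiff ℝ (⊤ : ℕ∞) fun ξ : ℝ ↦ 1 + ξ ^ 2 := by fun_prop
  exact (hsmooth.rpow_const_of_ne hu).mul
    ((contDiff_const.add (hsmooth.log hu)).rpow_const_of_ne hL)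

lemma hasDerivAt_logSobolevWeight (s β ξ : ℝ) :
    HasDerivAt (logSobolevWeight s β)
      (logSobolevWeight s β ξ *
        (ξ / (1 + ξ ^ 2) * (s + 2 * β / (1 + Real.log (1 + ξ ^ 2))))) ξ := by
  have hu : 0 < 1 + ξ ^ 2 := by positivity
  have hL : 0 < 1 + Real.log (1 + ξ ^ 2) := by linarith [one_le_one_add_log_one_add_sq ξ]
  have hdu : HasDerivAt (fun ξ : ℝ ↦ 1 + ξ ^ 2) (2 * ξ) ξ := by
    simpa using (hasDerivAt_pow 2 ξ).const_add 1
  have hdL : HasDerivAt (fun ξ : ℝ ↦ 1 + Real.log (1 + ξ ^ 2)) (2 * ξ / (1 + ξ ^ 2)) ξ :=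
    (hdu.log hu.ne').const_add 1
  refine ((hdu.rpow_const (p := s / 2) (Or.inl hu.ne')).mul
    (hdL.rpow_const (p := β) (Or.inl hL.ne'))).congr_deriv ?_
  rw [logSobolevWeight, Real.rpow_sub_one hu.ne', Real.rpow_sub_one hL.ne']
  field_simp

lemma deriv_logSobolevWeight_sq_le {s β : ℝ} (hs : s ≤ 0) (hβ : β ≤ 0) (ξ : ℝ) :
    deriv (logSobolevWeight s β) ξ ^ 2 ≤ (|s| + 2 * |β|) ^ 2 * (1 + ξ ^ 2)⁻¹ := by
  have hL := one_le_one_add_log_one_add_sq ξ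
  have hw : logSobolevWeight s β ξ ^ 2 ≤ 1 :=
    (sq_le_one_iff_abs_le_one _).2 (abs_logSobolevWeight_le_one hs hβ ξ)
  have hξ : (ξ / (1 + ξ ^ 2)) ^ 2 ≤ (1 + ξ ^ 2)⁻¹ := by
    rw [div_pow, div_le_iff₀ (by positivity)]
    field_simp
    linarith
  have hfactor : |s + 2 * β / (1 + Real.log (1 + ξ ^ 2))| ≤ |s| + 2 * |β| := by
    refine (abs_add_le _ _).trans (add_le_add_right ?_ _)
    rw [abs_div, abs_mul, abs_two, abs_of_pos (zero_lt_one.trans_le hL)]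
    exact div_le_self (by positivity) hL
  rw [(hasDerivAt_logSobolevWeight s β ξ).deriv, mul_pow, mul_pow,
    ← sq_abs (s + 2 * β / (1 + Real.log (1 + ξ ^ 2)))]
  calc _ ≤ 1 * ((1 + ξ ^ 2)⁻¹ * (|s| + 2 * |β|) ^ 2) := by gcongr
    _ = (|s| + 2 * |β|) ^ 2 * (1 + ξ ^ 2)⁻¹ := by ring

lemma integrable_deriv_logSobolevWeight_sq {s β : ℝ} (hs : s ≤ 0) (hβ : β ≤ 0) :
    Integrable fun ξ ↦ deriv (logSobolevWeight s β) ξ ^ 2 := by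
  refine (integrable_inv_one_add_sq.const_mul ((|s| + 2 * |β|) ^ 2)).mono'
    ((measurable_deriv _).pow_const 2).aestronglyMeasurable (Eventually.of_forall fun ξ ↦ ?_)
  rw [Real.norm_of_nonneg (sq_nonneg _)]
  exact deriv_logSobolevWeight_sq_le hs hβ ξ

lemma inv_isBigO_logSobolevWeight_sq {s : ℝ} (hs : -(1 / 2) < s) (β : ℝ) :
    (fun ξ ↦ ξ⁻¹) =O[atTop] fun ξ ↦ logSobolevWeight s β ξ ^ 2 := by
  have hu : Tendsto (fun ξ : ℝ ↦ 1 + ξ ^ 2) atTop atTop :=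
    tendsto_atTop_add_const_left _ _ (tendsto_pow_atTop two_ne_zero)
  have hweight : (fun ξ : ℝ ↦ (1 + ξ ^ 2) ^ (-(1 / 4) : ℝ)) =O[atTop] logSobolevWeight s β :=
    ((rpow_isLittleO_rpow_mul_one_add_log_rpow (by linarith) β).comp_tendsto hu).isBigO
  refine Asymptotics.IsBigO.trans (.of_bound (√2) ?_) (hweight.pow 2)
  filter_upwards [eventually_ge_atTop 1] with ξ hξ
  have hsqrt : ((1 + ξ ^ 2) ^ (-(1 / 4) : ℝ)) ^ 2 = (√(1 + ξ ^ 2))⁻¹ := by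
    rw [← Real.rpow_mul_natCast (by positivity), Real.sqrt_eq_rpow, ← Real.rpow_neg (by positivity)]
    norm_num
  rw [hsqrt, norm_inv, norm_inv, Real.norm_of_nonneg (by positivity),
    Real.norm_of_nonneg (by positivity), ← div_eq_mul_inv, inv_le_iff_one_le_mul₀ (by positivity),
    ← mul_div_right_comm, one_le_div (by positivity)]
  calc √(1 + ξ ^ 2) ≤ √(2 * ξ ^ 2) := Real.sqrt_le_sqrt (by nlinarith)
    _ = √2 * ξ := by rw [Real.sqrt_mul zero_le_two, Real.sqrt_sq (by positivity)]

lemma not_integrableOn_logSobolevWeight_sq {s : ℝ} (hs : -(1 / 2) < s) (β a : ℝ) :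
    ¬ IntegrableOn (fun ξ ↦ logSobolevWeight s β ξ ^ 2) (Set.Ioi a) := by
  refine not_integrableOn_of_tendsto_norm_atTop_of_deriv_isBigO_filter (f := Real.log) atTop
    (Ioi_mem_atTop a) ?_ (tendsto_norm_atTop_atTop.comp Real.tendsto_log_atTop) ?_
  · filter_upwards [eventually_ne_atTop 0] with ξ hξ
    exact Real.differentiableAt_log hξ
  · simpa only [Real.deriv_log'] using inv_isBigO_logSobolevWeight_sq hs β

end Weight

theorem localized_lambda_eps_norms_tendsto_atTop_general {s a β : ℝ} (hs : -(1 / 2) < s + 2 * a)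
    (hs0 : s + 2 * a ≤ 0) (hβ : β ≤ 0) {χ : ℕ → ℝ → ℝ} (hχ : IsUniformCutoff χ) {h r : ℝ}
    (hr : 0 < r) {p : ℝ → ℝ} (hp : AEStronglyMeasurable p) (hp01 : ∀ x, p x ∈ Set.Icc 0 1)
    (hp1 : ∀ x, |x + h| ≤ r → p x = 1) :
    Tendsto (fun n : ℕ ↦ ∫ x : ℝ, p x *
        ‖(1 / (2 * π) : ℂ) * ∫ ξ : ℝ, Complex.exp (Complex.I * x * ξ) *
            (((1 + ξ ^ 2) ^ (s / 2) : ℝ) : ℂ) *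
            (Complex.exp (h * Complex.I * ξ) * (χ n ξ : ℂ) *
              (((1 + ξ ^ 2) ^ a * (1 + Real.log (1 + ξ ^ 2)) ^ β : ℝ) : ℂ))‖ ^ 2)
      atTop atTop := by
  have key := hχ.tendsto_integral_mul_norm_sq_angularFourierInv
    (contDiff_logSobolevWeight (s + 2 * a) β) ⟨1, abs_logSobolevWeight_le_one hs0 hβ⟩
    (integrable_deriv_logSobolevWeight_sq hs0 hβ) (not_integrableOn_logSobolevWeight_sq hs β 0)
    hr hp hp01 hp1
  simp only [← angularFourierInv_exp_mul] at key
  convert key using 7 with n x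
  rw [angularFourierInv]
  congr 2 with ξ
  rw [← rpow_mul_rpow_mul_eq_logSobolevWeight]
  push_cast
  ring

/-- For the data `φ_n` with `φ̂_n(ξ) = e^{50iξ} χ_n(ξ)(1+ξ²)^{-1/4}(1+log(1+ξ²))^{-2}`
(with `χ_n` even smooth cutoffs equal to `1` on `[0,n]`, vanishing for `ξ ≥ n+1`, with
uniformly bounded derivatives) and a continuous `p : ℝ → [0,1]` with `p = 1` on
`[-99,-5]` and support in `[-110,-1]`, the localized quantities
`∫ p(x) |Λ^ε φ_n(x)|² dx` tend to infinity. -/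
theorem localized_lambda_eps_norms_tendsto_atTop
    (ε : ℝ) (hε : 0 < ε) (hε' : ε < 1 / 2)
    (χ : ℕ → ℝ → ℝ) (hχsmooth : ∀ n, ContDiff ℝ (⊤ : ℕ∞) (χ n))
    (hχeven : ∀ n ξ, χ n (-ξ) = χ n ξ)
    (hχ01 : ∀ n ξ, 0 ≤ χ n ξ ∧ χ n ξ ≤ 1)
    (hχone : ∀ n : ℕ, ∀ ξ : ℝ, 0 ≤ ξ → ξ ≤ n → χ n ξ = 1)
    (hχzero : ∀ n : ℕ, ∀ ξ : ℝ, (n : ℝ) + 1 ≤ ξ → χ n ξ = 0)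
    (hχderiv : ∀ k : ℕ, 1 ≤ k → ∃ K : ℝ, ∀ n ξ, |iteratedDeriv k (χ n) ξ| ≤ K)
    (p : ℝ → ℝ) (hp : Continuous p) (hp01 : ∀ x, 0 ≤ p x ∧ p x ≤ 1)
    (hpone : ∀ x ∈ Set.Icc (-99 : ℝ) (-5), p x = 1)
    (hpsupp : Function.support p ⊆ Set.Icc (-110 : ℝ) (-1)) :
    Tendsto (fun n : ℕ => ∫ x : ℝ, p x *
        ‖(1 / (2 * π) : ℂ) * ∫ ξ : ℝ, Complex.exp (Complex.I * x * ξ) *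
            (((1 + ξ ^ 2) ^ (ε / 2) : ℝ) : ℂ) *
            (Complex.exp (50 * Complex.I * ξ) * (χ n ξ : ℂ) *
              (((1 + ξ ^ 2) ^ (-(1 / 4 : ℝ)) *
                (1 + Real.log (1 + ξ ^ 2)) ^ (-(2 : ℝ)) : ℝ) : ℂ))‖ ^ 2)
      atTop atTop := by
  have hχ : IsUniformCutoff χ := isUniformCutoff_of_even hχsmooth hχeven
    (fun n ξ ↦ abs_le.2 ⟨by linarith [(hχ01 n ξ).1], (hχ01 n ξ).2⟩) hχone hχzero
    (by simpa using hχderiv 1 le_rfl)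
  have hp1 : ∀ x, |x + 50| ≤ 45 → p x = 1 := fun x hx ↦
    hpone x ⟨by linarith [(abs_le.1 hx).1], by linarith [(abs_le.1 hx).2]⟩
  simpa only [Complex.ofReal_ofNat] using localized_lambda_eps_norms_tendsto_atTop_general
    (s := ε) (a := -(1 / 4)) (β := -2) (h := 50) (by linarith) (by linarith) (by norm_num) hχ
    (by norm_num) hp.aestronglyMeasurable hp01 hp1
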